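/- Let b>0 and let G=(V,E) be a finite graph whose Cheeger constant is strictly greater than b. If p > 1/(1+b), then there is some δ>0, depending only on b and on p − 1/(1+b), such that for every vertex v∈V: μ_p(|C(v)| ≥ |V|/2) ≥ δ, where C(v) denotes the connected component of v in the random configuration. -/

import Mathlib

open Filter

noncomputable section

/-- The spanning subgraph of `G` determined by the configuration `x : {0,1}^E`:
an edge of `G` is retained iff its coordinate equals `true`. -/
def percoGraph {V : Type*} (G : SimpleGraph V) (x : G.edgeSet → Bool) : SimpleGraph V :=
  SimpleGraph.fromEdgeSet {e : Sym2 V | ∃ h : e ∈ G.edgeSet, x ⟨e, h⟩ = true}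

/-- The vertex set of the connected component of `v` in the configuration `x`. -/
def percoComp {V : Type*} (G : SimpleGraph V) (x : G.edgeSet → Bool) (v : V) : Set V :=
  {u | (percoGraph G x).Reachable v u}

/-- The number of vertices of the connected component of `v` in the configuration `x`. -/
def compSize {V : Type*} (G : SimpleGraph V) (x : G.edgeSet → Bool) (v : V) : ℕ :=
  (percoComp G x v).ncard

/-- `L⁽¹⁾`: the number of vertices of the largest connected component of the configuration. -/
def largestComp {V : Type*} (G : SimpleGraph V) (x : G.edgeSet → Bool) : ℕ :=
  sSup (Set.range (compSize G x))

/-- The probability of a single configuration under the product Bernoulli(p) measure. -/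
def configProb {E : Type*} (p : ℝ) (x : E → Bool) : ℝ :=
  ∏ᶠ e : E, if x e then p else 1 - p

/-- The product Bernoulli(p) probability of a set of configurations. -/
def probC {E : Type*} (p : ℝ) (A : Set (E → Bool)) : ℝ :=
  ∑ᶠ x ∈ A, configProb p x

/-- Expectation under the product Bernoulli(p) measure. -/
def expC {E : Type*} (p : ℝ) (f : (E → Bool) → ℝ) : ℝ :=
  ∑ᶠ x : E → Bool, configProb p x * f x

/-- Variance under the product Bernoulli(p) measure. -/
def varC {E : Type*} (p : ℝ) (f : (E → Bool) → ℝ) : ℝ :=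
  expC p (fun x => f x ^ 2) - (expC p f) ^ 2

open Classical in
/-- The configuration `x` with coordinate `e` set to `b`. -/
def setEdge {E : Type*} (x : E → Bool) (e : E) (b : Bool) : E → Bool :=
  fun e' => if e' = e then b else x e'

/-- The operator `Δ_{e,p} f (x) = f(x) - ∫ f(x) dx(e)`. -/
def deltaE {E : Type*} (p : ℝ) (f : (E → Bool) → ℝ) (e : E) (x : E → Bool) : ℝ :=
  f x - (p * f (setEdge x e true) + (1 - p) * f (setEdge x e false))

/-- The norm `‖g‖_{1,p}`. -/
def norm1 {E : Type*} (p : ℝ) (g : (E → Bool) → ℝ) : ℝ :=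
  expC p fun x => |g x|

/-- The squared norm `‖g‖_{2,p}²`. -/
def sqNorm2 {E : Type*} (p : ℝ) (g : (E → Bool) → ℝ) : ℝ :=
  expC p fun x => g x ^ 2

/-- `|E(S, Sᶜ)|`: the number of edges of `G` with one endpoint in `S` and the other outside `S`
(counted via the ordered pair whose first coordinate lies in `S`). -/
def edgeBoundaryCard {V : Type*} (G : SimpleGraph V) (S : Set V) : ℕ :=
  {q : V × V | G.Adj q.1 q.2 ∧ q.1 ∈ S ∧ q.2 ∉ S}.ncard

/-- The maximal degree of `G` is at most `d`. -/
def DegreeLE {V : Type*} (G : SimpleGraph V) (d : ℕ) : Prop :=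
  ∀ v, {u | G.Adj v u}.ncard ≤ d

/-- The Cheeger (edge-isoperimetric) constant of `G` is strictly greater than `b`. -/
def CheegerGT {V : Type*} (G : SimpleGraph V) (b : ℝ) : Prop :=
  ∀ S : Set V, 0 < S.ncard → 2 * S.ncard ≤ Nat.card V →
    b * (S.ncard : ℝ) < (edgeBoundaryCard G S : ℝ)

/-- A `(b,d)`-expander: a sequence of finite graphs with `|V_n| → ∞`, maximal degree at most `d`
and Cheeger constant greater than `b`. -/
structure ExpanderSeq (b : ℝ) (d : ℕ) where
  V : ℕ → Type
  finV : ∀ n, Finite (V n)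
  G : ∀ n, SimpleGraph (V n)
  card_tendsto : Tendsto (fun n => Nat.card (V n)) atTop atTop
  degree_le : ∀ n, DegreeLE (G n) d
  cheeger_gt : ∀ n, CheegerGT (G n) b

/-!
Explore the cluster of `v` one edge at a time, keeping the set `A` of vertices reached so far and
the set `F` of edges found closed. Querying an edge that leaves `A` and is not in `F` enlarges `A`
by a vertex with probability `p` and enlarges `F` by an edge otherwise. Since `p (1 + b) > 1`, there
is `l > 0` with `p e^{-lb} + (1 - p) e^l ≤ 1`, which makes `e^{l (|F| - b |A|)}` a supermartingale.
If the exploration stops with `|A| < |V| / 2`, then `F` contains the whole edge boundary of `A`, so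
the Cheeger bound gives `|F| > b |A|` and the supermartingale ends above `1`. As it starts from
`e^{-lb}`, this happens with probability at most `e^{-lb}`.
-/

section Percolation

variable {E : Type*} {p : ℝ}

lemma configProb_nonneg (h0 : 0 ≤ p) (h1 : p ≤ 1) (x : E → Bool) : 0 ≤ configProb p x := by
  refine finprod_nonneg fun e => ?_
  split_ifs
  exacts [h0, sub_nonneg.2 h1]

lemma expC_eq_sum [Fintype E] [DecidableEq E] (p : ℝ) (f : (E → Bool) → ℝ) :
    expC p f = ∑ x, configProb p x * f x :=
  finsum_eq_sum_of_fintype _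

lemma expC_add [Finite E] (p : ℝ) (f g : (E → Bool) → ℝ) :
    expC p (fun x => f x + g x) = expC p f + expC p g := by
  classical
  have := Fintype.ofFinite E
  simp only [expC_eq_sum, mul_add, Finset.sum_add_distrib]

lemma expC_const_mul [Finite E] (p c : ℝ) (f : (E → Bool) → ℝ) :
    expC p (fun x => c * f x) = c * expC p f := by
  classical
  have := Fintype.ofFinite E
  simp only [expC_eq_sum, mul_left_comm _ c, Finset.mul_sum]

lemma expC_mono [Finite E] (h0 : 0 ≤ p) (h1 : p ≤ 1) {f g : (E → Bool) → ℝ}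
    (hfg : ∀ x, f x ≤ g x) : expC p f ≤ expC p g := by
  classical
  have := Fintype.ofFinite E
  simp only [expC_eq_sum]
  exact Finset.sum_le_sum fun x _ =>
    mul_le_mul_of_nonneg_left (hfg x) (configProb_nonneg h0 h1 x)

lemma expC_one [Finite E] (p : ℝ) : expC p (fun _ : E → Bool => 1) = 1 := by
  classical
  have := Fintype.ofFinite E
  calc expC p (fun _ : E → Bool => 1)
      = ∑ x ∈ Fintype.piFinset fun _ : E => (Finset.univ : Finset Bool),
          ∏ e, if x e then p else 1 - p := by
        simp only [expC_eq_sum, configProb, finprod_eq_prod_of_fintype, mul_one,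
          Fintype.piFinset_univ]
    _ = ∏ _ : E, ∑ c : Bool, if c then p else 1 - p :=
        Finset.sum_prod_piFinset Finset.univ fun _ (c : Bool) => if c then p else 1 - p
    _ = 1 := by simp

lemma configProb_funSplitAt_symm [Finite E] [DecidableEq E] (p : ℝ) (e : E) (c : Bool)
    (y : {j // j ≠ e} → Bool) :
    configProb p ((Equiv.funSplitAt e Bool).symm (c, y)) =
      (if c then p else 1 - p) * configProb p y := by
  have := Fintype.ofFinite E
  simp only [configProb, finprod_eq_prod_of_fintype]
  rw [Fintype.prod_eq_mul_prod_subtype_ne _ e]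
  congr 1
  · simp
  · exact Finset.prod_congr rfl fun j _ => by simp [j.2]

lemma setEdge_funSplitAt_symm [DecidableEq E] (e : E) (c d : Bool) (y : {j // j ≠ e} → Bool) :
    setEdge ((Equiv.funSplitAt e Bool).symm (c, y)) e d =
      (Equiv.funSplitAt e Bool).symm (d, y) := by
  ext j
  by_cases hj : j = e
  · subst hj; simp [setEdge]
  · simp [setEdge, hj]

lemma expC_eq_expC_funSplitAt_symm [Finite E] [DecidableEq E] (p : ℝ) (e : E)
    (f : (E → Bool) → ℝ) :
    expC p f = expC p fun y : {j // j ≠ e} → Bool =>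
      p * f ((Equiv.funSplitAt e Bool).symm (true, y)) +
        (1 - p) * f ((Equiv.funSplitAt e Bool).symm (false, y)) := by
  have := Fintype.ofFinite E
  simp only [expC_eq_sum]
  rw [← (Equiv.funSplitAt e Bool).symm.sum_comp, Fintype.sum_prod_type_right]
  refine Finset.sum_congr rfl fun y _ => ?_
  simp only [Fintype.sum_bool, configProb_funSplitAt_symm, if_true, Bool.false_eq_true, if_false]
  ring

lemma expC_eq_setEdge [Finite E] (p : ℝ) (e : E) (f : (E → Bool) → ℝ) :
    expC p f = p * expC p (fun x => f (setEdge x e true)) +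
      (1 - p) * expC p (fun x => f (setEdge x e false)) := by
  classical
  rw [← expC_const_mul, ← expC_const_mul, ← expC_add]
  rw [expC_eq_expC_funSplitAt_symm p e f, expC_eq_expC_funSplitAt_symm p e fun x => _ + _]
  simp only [setEdge_funSplitAt_symm]
  congr 1
  ext y
  ring

lemma probC_eq_expC_indicator (p : ℝ) (A : Set (E → Bool)) :
    probC p A = expC p (A.indicator 1) := by
  rw [probC, finsum_mem_def]
  exact finsum_congr fun x => by by_cases hx : x ∈ A <;> simp [hx]

lemma probC_mono [Finite E] (h0 : 0 ≤ p) (h1 : p ≤ 1) {A B : Set (E → Bool)} (hAB : A ⊆ B) :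
    probC p A ≤ probC p B := by
  simp only [probC_eq_expC_indicator]
  exact expC_mono h0 h1 (Set.indicator_le_indicator_of_subset hAB fun _ => zero_le_one)

lemma probC_univ [Finite E] (p : ℝ) : probC p (Set.univ : Set (E → Bool)) = 1 := by
  rw [probC_eq_expC_indicator, Set.indicator_univ]
  exact expC_one p

lemma probC_le_one [Finite E] (h0 : 0 ≤ p) (h1 : p ≤ 1) (A : Set (E → Bool)) : probC p A ≤ 1 :=
  (probC_mono h0 h1 A.subset_univ).trans_eq (probC_univ p)

lemma probC_compl [Finite E] (p : ℝ) (A : Set (E → Bool)) : probC p Aᶜ = 1 - probC p A := by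
  rw [eq_sub_iff_add_eq', ← probC_univ (E := E) p]
  simp only [probC_eq_expC_indicator, ← expC_add, Set.indicator_self_add_compl_apply,
    Set.indicator_univ]

lemma probC_eq_setEdge [Finite E] (p : ℝ) (e : E) (A : Set (E → Bool)) :
    probC p A = p * probC p {x | setEdge x e true ∈ A} +
      (1 - p) * probC p {x | setEdge x e false ∈ A} := by
  simp only [probC_eq_expC_indicator]
  exact expC_eq_setEdge p e _

end Percolation

section Clusters

variable {V : Type*} {G H H' : SimpleGraph V} {A : Set V} {F : Set (Sym2 V)}

/-- The union of the connected components of the graph `H` that meet the vertex set `A`. -/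
def reachableFrom (H : SimpleGraph V) (A : Set V) : Set V :=
  {u | ∃ a ∈ A, H.Reachable a u}

lemma subset_reachableFrom (H : SimpleGraph V) (A : Set V) : A ⊆ reachableFrom H A :=
  fun a ha => ⟨a, ha, .rfl⟩

lemma reachableFrom_mono (hH : H ≤ H') (A : Set V) : reachableFrom H A ⊆ reachableFrom H' A :=
  fun _ ⟨a, ha, hau⟩ => ⟨a, ha, hau.mono hH⟩

lemma reachableFrom_insert_subset {a w : V} (ha : a ∈ A) (haw : H.Adj a w) :
    reachableFrom H (insert w A) ⊆ reachableFrom H A := by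
  rintro u ⟨c, rfl | hc, hcu⟩
  · exact ⟨a, ha, haw.reachable.trans hcu⟩
  · exact ⟨c, hc, hcu⟩

lemma reachableFrom_percoGraph_singleton (G : SimpleGraph V) (x : G.edgeSet → Bool) (v : V) :
    reachableFrom (percoGraph G x) {v} = percoComp G x v := by
  simp only [reachableFrom, percoComp, Set.mem_singleton_iff, exists_eq_left]

lemma percoGraph_adj {x : G.edgeSet → Bool} {a w : V} :
    (percoGraph G x).Adj a w ↔ ∃ h : G.Adj a w, x ⟨s(a, w), h⟩ = true := by
  rw [percoGraph, SimpleGraph.fromEdgeSet_adj]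
  exact ⟨fun h => h.1, fun h => ⟨h, h.1.ne⟩⟩

lemma percoGraph_le_setEdge_true (x : G.edgeSet → Bool) (e : G.edgeSet) :
    percoGraph G x ≤ percoGraph G (setEdge x e true) := by
  intro a w haw
  obtain ⟨h, hx⟩ := percoGraph_adj.1 haw
  exact percoGraph_adj.2 ⟨h, by simp [setEdge, hx]⟩

lemma percoGraph_deleteEdges_le_setEdge_false (x : G.edgeSet → Bool) (e : G.edgeSet) :
    (percoGraph G x).deleteEdges {e.1} ≤ percoGraph G (setEdge x e false) := by
  intro a w haw
  obtain ⟨hopen, hne⟩ := SimpleGraph.deleteEdges_adj.1 haw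
  obtain ⟨h, hx⟩ := percoGraph_adj.1 hopen
  have hne' : (⟨s(a, w), h⟩ : G.edgeSet) ≠ e := fun he => hne (congrArg Subtype.val he)
  exact percoGraph_adj.2 ⟨h, by simp only [setEdge, if_neg hne', hx]⟩

lemma edgeBoundaryCard_le_ncard (hfin : F.Finite)
    (hF : ∀ a ∈ A, ∀ w ∉ A, G.Adj a w → s(a, w) ∈ F) : edgeBoundaryCard G A ≤ F.ncard := by
  refine Set.ncard_le_ncard_of_injOn (fun q => s(q.1, q.2)) ?_ ?_ hfin
  · rintro ⟨a, w⟩ ⟨haw, ha, hw⟩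
    exact hF a ha w hw haw
  · rintro ⟨a, w⟩ ⟨-, ha, -⟩ ⟨a', w'⟩ ⟨-, -, hw'⟩ heq
    rcases Sym2.eq_iff.1 heq with ⟨rfl, rfl⟩ | ⟨rfl, rfl⟩
    · rfl
    · exact absurd ha hw'

/-- The event that fewer than half of the vertices can be reached from `A` through open edges
outside `F`. In the exploration, `A` is the set of vertices reached so far and `F` is the set of
edges found closed; an edge found open needs no record, since both its endpoints lie in `A`. -/
def smallCluster (G : SimpleGraph V) (A : Set V) (F : Set (Sym2 V)) : Set (G.edgeSet → Bool) :=
  {x | 2 * (reachableFrom ((percoGraph G x).deleteEdges F) A).ncard < Nat.card V}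

lemma smallCluster_eq_empty [Finite V] (F : Set (Sym2 V)) (hA : Nat.card V ≤ 2 * A.ncard) :
    smallCluster G A F = ∅ := by
  refine Set.eq_empty_of_forall_notMem fun x hx => ?_
  have hlt : 2 * (reachableFrom ((percoGraph G x).deleteEdges F) A).ncard < Nat.card V := hx
  have := Set.ncard_le_ncard (subset_reachableFrom ((percoGraph G x).deleteEdges F) A)
  omega

lemma compl_smallCluster_singleton_empty (G : SimpleGraph V) (v : V) :
    (smallCluster G {v} ∅)ᶜ = {x | (Nat.card V : ℝ) / 2 ≤ compSize G x v} := by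
  ext x
  simp only [smallCluster, SimpleGraph.deleteEdges_empty, reachableFrom_percoGraph_singleton,
    Set.mem_compl_iff, Set.mem_ofPred_eq, not_lt, compSize]
  rw [div_le_iff₀' two_pos]
  norm_cast

lemma setOf_setEdge_true_mem_smallCluster_subset [Finite V] {a w : V} (ha : a ∈ A)
    (haw : G.Adj a w) (hF : s(a, w) ∉ F) :
    {x | setEdge x ⟨s(a, w), haw⟩ true ∈ smallCluster G A F} ⊆ smallCluster G (insert w A) F := by
  intro x hx
  set x' := setEdge x ⟨s(a, w), haw⟩ true with hx'
  have hopen : ((percoGraph G x').deleteEdges F).Adj a w :=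
    SimpleGraph.deleteEdges_adj.2 ⟨percoGraph_adj.2 ⟨haw, by simp [hx', setEdge]⟩, hF⟩
  have hsub : reachableFrom ((percoGraph G x).deleteEdges F) (insert w A) ⊆
      reachableFrom ((percoGraph G x').deleteEdges F) A :=
    (reachableFrom_mono (SimpleGraph.deleteEdges_mono (percoGraph_le_setEdge_true x _)) _).trans
      (reachableFrom_insert_subset ha hopen)
  exact (Nat.mul_le_mul_left 2 (Set.ncard_le_ncard hsub)).trans_lt hx

lemma setOf_setEdge_false_mem_smallCluster_subset [Finite V] (A : Set V) (F : Set (Sym2 V))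
    (e : G.edgeSet) :
    {x | setEdge x e false ∈ smallCluster G A F} ⊆ smallCluster G A (insert e.1 F) := by
  intro x hx
  have hle : (percoGraph G x).deleteEdges (insert e.1 F) ≤
      (percoGraph G (setEdge x e false)).deleteEdges F := by
    rw [Set.insert_eq, ← SimpleGraph.deleteEdges_deleteEdges]
    exact SimpleGraph.deleteEdges_mono (percoGraph_deleteEdges_le_setEdge_false x e)
  exact (Nat.mul_le_mul_left 2 (Set.ncard_le_ncard (reachableFrom_mono hle A))).trans_lt hx

end Clusters

section Exploration

variable {V : Type*} [Finite V] {G : SimpleGraph V} {b p l : ℝ}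

lemma probC_smallCluster_le_add (h0 : 0 ≤ p) (h1 : p ≤ 1) {A : Set V} {F : Set (Sym2 V)}
    {a w : V} (ha : a ∈ A) (haw : G.Adj a w) (hF : s(a, w) ∉ F) :
    probC p (smallCluster G A F) ≤
      p * probC p (smallCluster G (insert w A) F) +
        (1 - p) * probC p (smallCluster G A (insert s(a, w) F)) := by
  rw [probC_eq_setEdge p ⟨s(a, w), haw⟩]
  have hopen := setOf_setEdge_true_mem_smallCluster_subset ha haw hF
  have hclosed := setOf_setEdge_false_mem_smallCluster_subset A F ⟨s(a, w), haw⟩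
  exact add_le_add (mul_le_mul_of_nonneg_left (probC_mono h0 h1 hopen) h0)
    (mul_le_mul_of_nonneg_left (probC_mono h0 h1 hclosed) (sub_nonneg.2 h1))

theorem probC_smallCluster_le_exp (hG : CheegerGT G b) (h0 : 0 ≤ p) (h1 : p ≤ 1) (hl : 0 ≤ l)
    (hpl : p * Real.exp (-(l * b)) + (1 - p) * Real.exp l ≤ 1)
    {A : Set V} {F : Set (Sym2 V)} (hA : A.Nonempty) :
    probC p (smallCluster G A F) ≤ Real.exp (l * (F.ncard - b * A.ncard)) := by
  rcases le_or_gt (Nat.card V) (2 * A.ncard) with hlarge | hsmall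
  · rw [smallCluster_eq_empty F hlarge, probC, finsum_mem_empty]
    exact (Real.exp_pos _).le
  by_cases hF : ∀ a ∈ A, ∀ w ∉ A, G.Adj a w → s(a, w) ∈ F
  · have hbdry : (edgeBoundaryCard G A : ℝ) ≤ F.ncard :=
      mod_cast edgeBoundaryCard_le_ncard F.toFinite hF
    have hcheeger : b * A.ncard < edgeBoundaryCard G A := hG A hA.ncard_pos hsmall.le
    refine (probC_le_one h0 h1 _).trans (Real.one_le_exp (mul_nonneg hl ?_))
    linarith
  push Not at hF
  obtain ⟨a, ha, w, hw, haw, he⟩ := hF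
  have hopen := probC_smallCluster_le_exp (F := F) hG h0 h1 hl hpl (Set.insert_nonempty w A)
  have hclosed := probC_smallCluster_le_exp (F := insert s(a, w) F) hG h0 h1 hl hpl hA
  rw [Set.ncard_insert_of_notMem hw] at hopen
  rw [Set.ncard_insert_of_notMem he] at hclosed
  calc probC p (smallCluster G A F)
      ≤ p * Real.exp (l * (F.ncard - b * (A.ncard + 1 : ℕ))) +
          (1 - p) * Real.exp (l * ((F.ncard + 1 : ℕ) - b * A.ncard)) :=
        (probC_smallCluster_le_add h0 h1 ha haw he).trans <|
          add_le_add (mul_le_mul_of_nonneg_left hopen h0)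
            (mul_le_mul_of_nonneg_left hclosed (sub_nonneg.2 h1))
    _ = Real.exp (l * (F.ncard - b * A.ncard)) *
          (p * Real.exp (-(l * b)) + (1 - p) * Real.exp l) := by
        rw [mul_add, mul_left_comm, mul_left_comm _ (1 - p), ← Real.exp_add, ← Real.exp_add]
        push_cast
        ring_nf
    _ ≤ Real.exp (l * (F.ncard - b * A.ncard)) :=
        mul_le_of_le_one_right (Real.exp_pos _).le hpl
termination_by Aᶜ.ncard + Fᶜ.ncard
decreasing_by
  · exact Nat.add_lt_add_right
      (Set.ncard_lt_ncard (compl_lt_compl_iff_lt.2 (Set.ssubset_insert hw))) _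
  · exact Nat.add_lt_add_left
      (Set.ncard_lt_ncard (compl_lt_compl_iff_lt.2 (Set.ssubset_insert he))) _

theorem one_sub_exp_le_probC_half_le_compSize (hG : CheegerGT G b) (h0 : 0 ≤ p) (h1 : p ≤ 1)
    (hl : 0 ≤ l) (hpl : p * Real.exp (-(l * b)) + (1 - p) * Real.exp l ≤ 1) (v : V) :
    1 - Real.exp (-(l * b)) ≤ probC p {x | (Nat.card V : ℝ) / 2 ≤ compSize G x v} := by
  have hsmall : probC p (smallCluster G {v} ∅) ≤ Real.exp (-(l * b)) := by
    simpa using probC_smallCluster_le_exp (F := ∅) hG h0 h1 hl hpl (Set.singleton_nonempty v)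
  rw [← compl_smallCluster_singleton_empty, probC_compl]
  exact sub_le_sub_left hsmall 1

end Exploration

lemma exists_gt_apply_lt_of_hasDerivAt_neg {f : ℝ → ℝ} {f' a : ℝ} (hf : HasDerivAt f f' a)
    (hf' : f' < 0) : ∃ x, a < x ∧ f x < f a := by
  have hslope : Tendsto (slope f a) (nhdsWithin a (Set.Ioi a)) (nhds f') :=
    (hasDerivWithinAt_iff_tendsto_slope' Set.self_notMem_Ioi).1 hf.hasDerivWithinAt
  obtain ⟨x, hx, hax⟩ := ((hslope.eventually_lt_const hf').and self_mem_nhdsWithin).exists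
  exact ⟨x, hax, by simpa using (slope_neg_iff_of_le hax.le).1 hx⟩

lemma exists_pos_exp_moment_le_one {b p : ℝ} (hp : 1 < p * (1 + b)) :
    ∃ l : ℝ, 0 < l ∧ p * Real.exp (-(l * b)) + (1 - p) * Real.exp l ≤ 1 := by
  have hderiv : HasDerivAt (fun l : ℝ => p * Real.exp (-(l * b)) + (1 - p) * Real.exp l)
      (1 - p * (1 + b)) 0 := by
    have hexp : HasDerivAt (fun l : ℝ => Real.exp (-(l * b)))
        (Real.exp (-(0 * b)) * -(1 * b)) 0 := ((hasDerivAt_id 0).mul_const b).neg.exp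
    refine ((hexp.const_mul p).add ((Real.hasDerivAt_exp 0).const_mul (1 - p))).congr_deriv ?_
    rw [zero_mul, neg_zero, Real.exp_zero]
    ring
  obtain ⟨l, hl, hlt⟩ := exists_gt_apply_lt_of_hasDerivAt_neg hderiv (sub_neg.2 hp)
  exact ⟨l, hl, hlt.le.trans_eq (by simp)⟩

/-- if the Cheeger constant of `G` is greater than `b` and `p > 1/(1+b)`, then
for every vertex `v`, `μ_p(|C(v)| ≥ |V|/2) ≥ δ`, where `δ > 0` depends only on `b` and on
the gap `p - 1/(1+b)`. -/
theorem stmt4 (b : ℝ) (hb : 0 < b) :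
    ∃ δ : ℝ → ℝ, (∀ s : ℝ, 0 < s → 0 < δ s) ∧
      ∀ (V : Type) (_ : Finite V) (G : SimpleGraph V), CheegerGT G b →
        ∀ p : ℝ, 1 / (1 + b) < p → p ≤ 1 →
          ∀ v : V,
            δ (p - 1 / (1 + b)) ≤
              probC p {x : G.edgeSet → Bool |
                (Nat.card V : ℝ) / 2 ≤ (compSize G x v : ℝ)} := by
  have hmoment (s : ℝ) (hs : 0 < s) : ∃ l : ℝ, 0 < l ∧
      (s + 1 / (1 + b)) * Real.exp (-(l * b)) + (1 - (s + 1 / (1 + b))) * Real.exp l ≤ 1 := by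
    refine exists_pos_exp_moment_le_one ?_
    rw [← div_lt_iff₀ (by positivity)]
    exact lt_add_of_pos_left _ hs
  choose! l hl hpl using hmoment
  refine ⟨fun s => 1 - Real.exp (-(l s * b)), fun s hs => ?_, fun V _ G hG p hp hp1 v => ?_⟩
  · exact sub_pos.2 (Real.exp_lt_one_iff.2 (neg_lt_zero.2 (mul_pos (hl s hs) hb)))
  · have hs : 0 < p - 1 / (1 + b) := sub_pos.2 hp
    have hp0 : 0 ≤ p := le_trans (by positivity) hp.le
    refine one_sub_exp_le_probC_half_le_compSize hG hp0 hp1 (hl _ hs).le ?_ v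
    simpa only [sub_add_cancel] using hpl _ hs
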